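/- The topological group M_F is ℵ₀-bounded — that is, for every open neighborhood U of the zero function 0̲ in M_F there exists a countable set S ⊆ M with S + U = M — if and only if every A ∈ 𝒜_> can be written as a union of finitely many μ-atoms. -/

import Mathlib

open MeasureTheory Topology Set Pointwise

/-- The set of all real-valued measurable functions on `X`, as a subtype. -/
abbrev Mble (X : Type*) [MeasurableSpace X] : Type _ := {f : X → ℝ // Measurable f}

/-- The basic set `B(f, A, ε)`: all `g` such that for some measurable null set `N`,
`sup_{x ∈ A \ N} |f x - g x| < ε`. -/
def FBall {X : Type*} [MeasurableSpace X] (μ : Measure X) (f : Mble X) (A : Set X)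
    (ε : ℝ) : Set (Mble X) :=
  {g | ∃ N : Set X, MeasurableSet N ∧ μ N = 0 ∧
        ∃ b : ℝ, b < ε ∧ ∀ x ∈ A \ N, |f.1 x - g.1 x| ≤ b}

/-- The `F_μ`-topology on `Mble X`, generated by the sets `B(f, A, ε)` with
`A` measurable of finite measure and `ε > 0`. -/
def FTop {X : Type*} [MeasurableSpace X] (μ : Measure X) : TopologicalSpace (Mble X) :=
  TopologicalSpace.generateFrom
    {S | ∃ (f : Mble X) (A : Set X) (ε : ℝ),
        MeasurableSet A ∧ μ A < ⊤ ∧ 0 < ε ∧ S = FBall μ f A ε}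

/-- A `μ`-atom: a measurable set of positive measure admitting no decomposition into two
disjoint measurable pieces of positive measure. -/
def MuAtom {X : Type*} [MeasurableSpace X] (μ : Measure X) (A : Set X) : Prop :=
  MeasurableSet A ∧ 0 < μ A ∧
    ¬ ∃ B C : Set X, MeasurableSet B ∧ MeasurableSet C ∧ Disjoint B C ∧
        B ∪ C = A ∧ 0 < μ B ∧ 0 < μ C

/-- `G` is a union of finitely many `μ`-atoms. -/
def FinAtomUnion {X : Type*} [MeasurableSpace X] (μ : Measure X) (G : Set X) : Prop :=
  ∃ (n : ℕ) (F : Fin n → Set X), (∀ i, MuAtom μ (F i)) ∧ G = ⋃ i, F i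

/-- `L^∞_G`: the measurable functions that are essentially bounded on `G`. -/
def Linf {X : Type*} [MeasurableSpace X] (μ : Measure X) (G : Set X) : Set (Mble X) :=
  {f | ∃ M₀ : ℝ, 0 < M₀ ∧ ∃ N : Set X, MeasurableSet N ∧ μ N = 0 ∧
        ∀ x ∈ G \ N, |f.1 x| ≤ M₀}

/-- The intersection `⋂_{G ∈ 𝒜_>} L^∞_G`. -/
def InterLinf {X : Type*} [MeasurableSpace X] (μ : Measure X) : Set (Mble X) :=
  ⋂ G ∈ {A : Set X | MeasurableSet A ∧ 0 < μ A ∧ μ A < ⊤}, Linf μ G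

/-- The zero function as an element of `Mble X`. -/
def zeroM {X : Type*} [MeasurableSpace X] : Mble X := ⟨fun _ => 0, measurable_const⟩

/-- `μ` is hemifinite: some sequence in `𝒜_>` almost contains every member of `𝒜_>`. -/
def Hemifinite {X : Type*} [MeasurableSpace X] (μ : Measure X) : Prop :=
  ∃ A : ℕ → Set X, (∀ n, MeasurableSet (A n) ∧ 0 < μ (A n) ∧ μ (A n) < ⊤) ∧
    ∀ F : Set X, MeasurableSet F → 0 < μ F → μ F < ⊤ → ∃ n, μ (F \ A n) = 0

/-- `G⁺`: functions strictly positive μ-almost everywhere on `G`. -/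
def Gplus {X : Type*} [MeasurableSpace X] (μ : Measure X) (G : Set X) : Set (Mble X) :=
  {f | ∃ N : Set X, MeasurableSet N ∧ μ N = 0 ∧ ∀ x ∈ G \ N, 0 < f.1 x}

/-- `G⁰`: functions nonnegative μ-almost everywhere on `G`. -/
def Gzero {X : Type*} [MeasurableSpace X] (μ : Measure X) (G : Set X) : Set (Mble X) :=
  {f | ∃ N : Set X, MeasurableSet N ∧ μ N = 0 ∧ ∀ x ∈ G \ N, 0 ≤ f.1 x}

instance {X : Type*} [MeasurableSpace X] : Add (Mble X) :=
  ⟨fun f g => ⟨f.1 + g.1, f.2.add g.2⟩⟩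

theorem aux_nhd {X : Type*} [MeasurableSpace X] (μ : Measure X) (U : Set (Mble X))
    (hU : IsOpen[FTop μ] U) (h0 : zeroM ∈ U) :
    ∃ (A : Set X) (ε : ℝ), MeasurableSet A ∧ μ A < ⊤ ∧ 0 < ε ∧ FBall μ zeroM A ε ⊆ U := by
  have hU' : TopologicalSpace.GenerateOpen {S | ∃ (f : Mble X) (A : Set X) (ε : ℝ),
        MeasurableSet A ∧ μ A < ⊤ ∧ 0 < ε ∧ S = FBall μ f A ε} U := hU
  clear hU
  induction hU' with
  | basic s hs =>
    obtain ⟨f, A, ε, hA, hA', hε, rfl⟩ := hs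
    obtain ⟨N, hN, hN0, b, hb, h⟩ := h0
    refine ⟨A, ε - b, hA, hA', by linarith, ?_⟩
    rintro g ⟨N', hN', hN0', b', hb', h'⟩
    refine ⟨N ∪ N', hN.union hN', measure_union_null hN0 hN0', b + b', by linarith, ?_⟩
    intro x hx
    have h1 := h x ⟨hx.1, fun hh => hx.2 (Or.inl hh)⟩
    have h2 := h' x ⟨hx.1, fun hh => hx.2 (Or.inr hh)⟩
    have h3 := abs_sub_le (f.1 x) (zeroM.1 x) (g.1 x)
    linarith
  | univ => exact ⟨∅, 1, MeasurableSet.empty, by simp, one_pos, subset_univ _⟩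
  | inter s t _ _ ihs iht =>
    obtain ⟨A, a, hA, hA', ha, h⟩ := ihs h0.1
    obtain ⟨B, b, hB, hB', hb, h'⟩ := iht h0.2
    refine ⟨A ∪ B, min a b, hA.union hB, measure_union_lt_top hA' hB', lt_min ha hb, ?_⟩
    rintro g ⟨N, hN, hN0, c, hc, hg⟩
    exact ⟨h ⟨N, hN, hN0, c, hc.trans_le (min_le_left _ _),
        fun x hx => hg x ⟨Or.inl hx.1, hx.2⟩⟩,
      h' ⟨N, hN, hN0, c, hc.trans_le (min_le_right _ _),
        fun x hx => hg x ⟨Or.inr hx.1, hx.2⟩⟩⟩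
  | sUnion S _ ih =>
    obtain ⟨s, hs, h0s⟩ := h0
    obtain ⟨A, a, hA, hA', ha, h⟩ := ih s hs h0s
    exact ⟨A, a, hA, hA', ha, h.trans (subset_sUnion_of_mem hs)⟩

theorem aux_code {X : Type*} [MeasurableSpace X] (μ : Measure X) (F : Set X) (hF : MuAtom μ F)
    (φ : X → ℤ) (hφ : Measurable φ) : ∃ k, μ (F \ φ ⁻¹' {k}) = 0 := by
  obtain ⟨hm, hp, hn⟩ := hF
  have hk : ∀ k, MeasurableSet (φ ⁻¹' {k}) := fun k => hφ (measurableSet_singleton k)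
  by_contra! hc
  apply hp.ne'
  have : F = ⋃ k, F ∩ φ ⁻¹' {k} := by ext x; simp
  rw [this, measure_iUnion_null_iff]
  intro k
  by_contra h
  exact hn ⟨_, _, hm.inter (hk k), hm.diff (hk k), disjoint_sdiff_inter.symm,
    inter_union_diff _ _, pos_iff_ne_zero.2 h, pos_iff_ne_zero.2 (hc k)⟩

theorem aux_union {X : Type*} [MeasurableSpace X] (μ : Measure X) (A B : Set X)
    (hA : FinAtomUnion μ A) (hB : FinAtomUnion μ B) : FinAtomUnion μ (A ∪ B) := by
  obtain ⟨n, F, hF, rfl⟩ := hA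
  obtain ⟨m, G, hG, rfl⟩ := hB
  refine ⟨n + m, Fin.append F G, fun i => ?_, ?_⟩
  · induction i using Fin.addCases with
    | left i => simpa using hF i
    | right i => simpa using hG i
  · ext x
    simp only [mem_union, mem_iUnion]
    constructor
    · rintro (⟨i, hi⟩ | ⟨i, hi⟩)
      · exact ⟨Fin.castAdd m i, by simpa using hi⟩
      · exact ⟨Fin.natAdd n i, by simpa using hi⟩
    · rintro ⟨i, hi⟩
      induction i using Fin.addCases with
      | left i => exact Or.inl ⟨i, by simpa using hi⟩
      | right i => exact Or.inr ⟨i, by simpa using hi⟩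

def AuxBad {X : Type*} [MeasurableSpace X] (μ : Measure X) (A : Set X) : Prop :=
  MeasurableSet A ∧ 0 < μ A ∧ ¬ FinAtomUnion μ A

theorem aux_split {X : Type*} [MeasurableSpace X] (μ : Measure X) (A : Set X)
    (hA : AuxBad μ A) : ∃ B, AuxBad μ B ∧ B ⊆ A ∧ 0 < μ (A \ B) := by
  obtain ⟨hm, hp, hn⟩ := hA
  have h1 : ¬ MuAtom μ A := fun h => hn ⟨1, fun _ => A, fun _ => h, by simp [iUnion_const]⟩
  have h2 : ∃ B C : Set X, MeasurableSet B ∧ MeasurableSet C ∧ Disjoint B C ∧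
        B ∪ C = A ∧ 0 < μ B ∧ 0 < μ C := by
    by_contra h
    exact h1 ⟨hm, hp, h⟩
  obtain ⟨B, C, hB, hC, hd, rfl, hB0, hC0⟩ := h2
  by_cases h : FinAtomUnion μ B
  · refine ⟨C, ⟨hC, hC0, fun h' => hn (aux_union μ B C h h')⟩, subset_union_right, ?_⟩
    rwa [union_diff_right, hd.sdiff_eq_left]
  · refine ⟨B, ⟨hB, hB0, h⟩, subset_union_left, ?_⟩
    rwa [union_diff_left, hd.sdiff_eq_right]

theorem aux_seq {X : Type*} [MeasurableSpace X] (μ : Measure X) (A : Set X)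
    (hA : AuxBad μ A) : ∃ C : ℕ → Set X, (∀ n, MeasurableSet (C n)) ∧ (∀ n, 0 < μ (C n)) ∧
      (∀ n, C n ⊆ A) ∧ Pairwise (fun i j => Disjoint (C i) (C j)) := by
  choose! f hf1 hf2 hf3 using aux_split μ
  let D : ℕ → Set X := fun n => f^[n] A
  have hs : ∀ n, D (n + 1) = f (D n) := fun n => Function.iterate_succ_apply' f n A
  have hD : ∀ n, AuxBad μ (D n) := by
    intro n
    induction n with
    | zero => exact hA
    | succ n ih => rw [hs]; exact hf1 _ ih
  have hanti : Antitone D := antitone_nat_of_succ_le fun n => by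
    rw [hs]; exact hf2 _ (hD n)
  refine ⟨fun n => D n \ D (n + 1), fun n => (hD n).1.diff (hD (n + 1)).1, fun n => ?_,
    fun n => diff_subset.trans (hanti (Nat.zero_le n)), ?_⟩
  · have := hf3 _ (hD n)
    rw [← hs] at this
    exact this
  · rw [Std.Symm.pairwise_on]
    intro i j hij
    rw [Set.disjoint_left]
    rintro x hx hx'
    exact hx.2 (hanti (Nat.succ_le_of_lt hij) hx'.1)

theorem aux_fwd {X : Type*} [MeasurableSpace X] (μ : Measure X)
    (H : ∀ U : Set (Mble X), IsOpen[FTop μ] U → zeroM ∈ U →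
        ∃ S : Set (Mble X), S.Countable ∧ S + U = Set.univ)
    (A : Set X) (hA : MeasurableSet A) (hA0 : 0 < μ A) (hA1 : μ A < ⊤) : FinAtomUnion μ A := by
  by_contra hn
  obtain ⟨C, hC, hC0, hCA, hd⟩ := aux_seq μ A ⟨hA, hA0, hn⟩
  obtain ⟨S, hS, hSU⟩ := H (FBall μ zeroM A 1)
    (TopologicalSpace.GenerateOpen.basic _ ⟨zeroM, A, 1, hA, hA1, one_pos, rfl⟩)
    ⟨∅, MeasurableSet.empty, by simp, 0, one_pos, by simp⟩
  haveI : Nonempty (Mble X) := ⟨zeroM⟩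
  obtain ⟨s, hs⟩ := Set.countable_iff_exists_subset_range.1 hS
  obtain ⟨f, hf, hfe⟩ := exists_measurable_piecewise C hC (fun n x => (s n).1 x + 2)
    (fun n => (s n).2.add_const 2) (fun i j hij x hx =>
      ((Set.disjoint_left.1 (hd hij)) hx.1 hx.2).elim)
  have hmem : (⟨f, hf⟩ : Mble X) ∈ S + FBall μ zeroM A 1 := by rw [hSU]; trivial
  obtain ⟨g, hg, u, ⟨N, hN, hN0, b, hb, hu⟩, hgu⟩ := Set.mem_add.1 hmem
  obtain ⟨n, rfl⟩ := hs hg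
  have hne : (C n \ N).Nonempty := by
    apply nonempty_of_measure_ne_zero (μ := μ)
    rw [measure_sdiff_null hN0]
    exact (hC0 n).ne'
  obtain ⟨x, hx⟩ := hne
  have h1 := hu x ⟨hCA n hx.1, hx.2⟩
  have h2 : (s n).1 x + u.1 x = f x := congrFun (congrArg Subtype.val hgu) x
  have h3 : f x = (s n).1 x + 2 := hfe n hx.1
  have h4 : u.1 x = 2 := by linarith
  rw [h4] at h1
  simp only [zeroM] at h1
  norm_num at h1
  linarith

theorem aux_bwd {X : Type*} [MeasurableSpace X] (μ : Measure X)
    (H : ∀ A : Set X, MeasurableSet A → 0 < μ A → μ A < ⊤ → FinAtomUnion μ A)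
    (U : Set (Mble X)) (hU : IsOpen[FTop μ] U) (h0 : zeroM ∈ U) :
    ∃ S : Set (Mble X), S.Countable ∧ S + U = Set.univ := by
  obtain ⟨A, ε, hA, hA1, hε, hsub⟩ := aux_nhd μ U hU h0
  have key : ∃ (n : ℕ) (F : Fin n → Set X), (∀ i, MuAtom μ (F i)) ∧ μ (A \ ⋃ i, F i) = 0 := by
    rcases eq_or_ne (μ A) 0 with h | h
    · exact ⟨0, fun _ => ∅, fun i => i.elim0, measure_mono_null diff_subset h⟩
    · obtain ⟨n, F, hF, hAF⟩ := H A hA (pos_iff_ne_zero.2 h) hA1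
      exact ⟨n, F, hF, by rw [hAF]; simp⟩
  obtain ⟨n, F, hF, hAF⟩ := key
  have hm : ∀ f : Mble X, Measurable (fun x => ⌊f.1 x / (ε / 2)⌋) :=
    fun f => (f.2.div_const _).floor
  have hc : ∀ (f : Mble X) (i : Fin n),
      ∃ k, μ (F i \ (fun x => ⌊f.1 x / (ε / 2)⌋) ⁻¹' {k}) = 0 :=
    fun f i => aux_code μ (F i) (hF i) _ (hm f)
  choose c hc using hc
  have : Nonempty (Mble X) := ⟨zeroM⟩
  let r : (Fin n → ℤ) → Mble X := Function.invFun c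
  refine ⟨range r, countable_range r, eq_univ_of_forall fun f => ?_⟩
  have hr : c (r (c f)) = c f := Function.invFun_eq ⟨f, rfl⟩
  set g := r (c f) with hg
  refine Set.mem_add.2 ⟨g, ⟨c f, rfl⟩, ⟨fun x => f.1 x - g.1 x, f.2.sub g.2⟩, hsub ?_, ?_⟩
  · let P : Mble X → Set X := fun h => ⋃ i, (F i \ (fun x => ⌊h.1 x / (ε / 2)⌋) ⁻¹' {c h i})
    have hP : ∀ h, MeasurableSet (P h) := fun h => MeasurableSet.iUnion fun i =>
      (hF i).1.diff (hm h (measurableSet_singleton _))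
    have hP0 : ∀ h, μ (P h) = 0 := fun h => measure_iUnion_null (hc h)
    refine ⟨(A \ ⋃ i, F i) ∪ (P f ∪ P g),
      (hA.diff (MeasurableSet.iUnion fun i => (hF i).1)).union ((hP f).union (hP g)),
      measure_union_null hAF (measure_union_null (hP0 f) (hP0 g)), ε / 2, by linarith, ?_⟩
    rintro x ⟨hxA, hx⟩
    simp only [mem_union, not_or] at hx
    obtain ⟨hx1, hx2, hx3⟩ := hx
    have hxF : x ∈ ⋃ i, F i := by
      by_contra h
      exact hx1 ⟨hxA, h⟩
    obtain ⟨i, hi⟩ := mem_iUnion.1 hxF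
    have e1 : ⌊f.1 x / (ε / 2)⌋ = c f i := by
      by_contra h
      exact hx2 (mem_iUnion.2 ⟨i, hi, h⟩)
    have e2 : ⌊g.1 x / (ε / 2)⌋ = c g i := by
      by_contra h
      exact hx3 (mem_iUnion.2 ⟨i, hi, h⟩)
    have e3 := Int.abs_sub_lt_one_of_floor_eq_floor (e1.trans ((congrFun hr i).symm.trans e2.symm))
    have hε2 : 0 < ε / 2 := by linarith
    rw [← sub_div, abs_div, abs_of_pos hε2, div_lt_one hε2] at e3
    simpa [zeroM, abs_sub_comm] using e3.le
  · apply Subtype.ext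
    funext x
    change g.1 x + (f.1 x - g.1 x) = f.1 x
    ring

/-- `M_F` is `ℵ₀`-bounded iff every `A ∈ 𝒜_>` is a finite union of
`μ`-atoms. -/
theorem stmt10 {X : Type*} [MeasurableSpace X] (μ : Measure X)
    (hpos : 0 < μ Set.univ)
    (hsub : ∀ A : Set X, MeasurableSet A → μ A = ⊤ →
      ∃ B, B ⊆ A ∧ MeasurableSet B ∧ 0 < μ B ∧ μ B < ⊤) :
    (∀ U : Set (Mble X), IsOpen[FTop μ] U → zeroM ∈ U →
        ∃ S : Set (Mble X), S.Countable ∧ S + U = Set.univ) ↔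
      ∀ A : Set X, MeasurableSet A → 0 < μ A → μ A < ⊤ → FinAtomUnion μ A := by
  exact ⟨fun H A hA h0 h1 => aux_fwd μ H A hA h0 h1, fun H U hU h0 => aux_bwd μ H U hU h0⟩
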